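/- One has $\int_{0}^{\pi/4}\Big(\frac{3}{10}\Big(\frac{1}{(\cos\theta+\sin\theta)^2}+\frac{1}{(\cos\theta-\sin\theta)^2}\Big)+\frac{2}{5\cos^2\theta}\Big)\cos^3(2\theta)\,\cos^4\theta\,\sin^4\theta\,d\theta = \frac{17}{2400}-\frac{\pi}{1280}$. -/

import Mathlib

open Real MeasureTheory

/-!
Write `C = cos 2θ` and `S = sin 2θ`. Since `(cos θ + sin θ)(cos θ - sin θ) = C`, the first two
fractions add up to `2 / C²`; with `cos⁴θ sin⁴θ = S⁴/16` and `cos²θ sin⁴θ = S²(1 - C)/8` the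
integrand becomes the trigonometric polynomial `(3/80) C S⁴ + (1/20) (C³ - C⁴) S²`, which has an
elementary antiderivative. The `π` comes from the `C⁴ S²` term alone.
-/

/-- At `θ = π/4` the integrand contains a division by zero, but both sides vanish there because of
the factor `cos 2θ`, so the identity holds on the whole closed interval. -/
lemma integrand_eq (θ : ℝ) (hc : cos θ ≠ 0) :
    ((3/10) * (1 / (cos θ + sin θ)^2 + 1 / (cos θ - sin θ)^2) + 2 / (5 * (cos θ)^2))
        * (cos (2*θ))^3 * (cos θ)^4 * (sin θ)^4
      = (3/80) * (cos (2*θ) * sin (2*θ)^4)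
        + (1/20) * ((cos (2*θ)^3 - cos (2*θ)^4) * sin (2*θ)^2) := by
  have h1 : cos θ ^ 2 + sin θ ^ 2 = 1 := cos_sq_add_sin_sq θ
  have hC : cos (2*θ) = (cos θ + sin θ) * (cos θ - sin θ) := by rw [cos_two_mul']; ring
  by_cases h0 : cos (2*θ) = 0
  · simp [h0]
  obtain ⟨hp, hm⟩ := mul_ne_zero_iff.mp (hC ▸ h0)
  have hfrac : 1 / (cos θ + sin θ)^2 + 1 / (cos θ - sin θ)^2 = 2 / cos (2*θ)^2 := by
    rw [hC]
    field_simp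
    linear_combination 2 * h1
  have hs : sin θ ^ 2 = (1 - cos (2*θ)) / 2 := by
    rw [cos_two_mul']
    linear_combination (1/2) * h1
  have hred : ((3/10) * (2 / cos (2*θ)^2) + 2 / (5 * (cos θ)^2))
        * (cos (2*θ))^3 * (cos θ)^4 * (sin θ)^4
      = (3/5) * cos (2*θ) * (cos θ * sin θ)^4
        + (2/5) * cos (2*θ)^3 * (cos θ * sin θ)^2 * sin θ ^ 2 := by
    field_simp
    ring
  have hcs : cos θ * sin θ = sin (2*θ) / 2 := by rw [sin_two_mul]; ring
  rw [hfrac, hred, hcs, hs]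
  ring

lemma hasDerivAt_antideriv (θ : ℝ) :
    HasDerivAt (fun t : ℝ => (3/800) * sin (2*t)^5
        + (1/20) * (sin (2*t)^3 / 6 - sin (2*t)^5 / 10)
        - (1/40) * (2*t / 16 + sin (2*t) * cos (2*t) / 16 + sin (2*t) * cos (2*t)^3 / 24
            - sin (2*t) * cos (2*t)^5 / 6))
      ((3/80) * (cos (2*θ) * sin (2*θ)^4)
        + (1/20) * ((cos (2*θ)^3 - cos (2*θ)^4) * sin (2*θ)^2)) θ := by
  have hl : HasDerivAt (fun t : ℝ => 2*t) 2 θ := by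
    simpa using (hasDerivAt_id θ).const_mul (2:ℝ)
  have hS := hl.sin
  have hK := hl.cos
  have H := (((hS.pow 5).const_mul (3/800:ℝ)).add
    ((((hS.pow 3).div_const 6).sub ((hS.pow 5).div_const 10)).const_mul (1/20:ℝ))).sub
    (((((hl.div_const 16).add ((hS.mul hK).div_const 16)).add
      ((hS.mul (hK.pow 3)).div_const 24)).sub
      ((hS.mul (hK.pow 5)).div_const 6)).const_mul (1/40:ℝ))
  refine H.congr_deriv ?_
  -- Powers of `C` are reduced by `C² = 1 - S²`, after which both sides agree as polynomials.
  have h1 : cos (2*θ)^2 = 1 - sin (2*θ)^2 := cos_sq' (2*θ)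
  simp only [Pi.pow_apply]
  generalize cos (2*θ) = C at *
  generalize sin (2*θ) = S at *
  push_cast
  have h3 : C^3 = C * (1 - S^2) := by rw [← h1]; ring
  have h4 : C^4 = (1 - S^2)^2 := by rw [← h1]; ring
  norm_num
  ring_nf
  have h6 : C^6 = (1 - S^2)^3 := by rw [← h1]; ring
  simp only [h1, h3, h4, h6]
  ring

/-- `∫_0^{π/4} ((3/10)(1/(cosθ+sinθ)² + 1/(cosθ-sinθ)²) + 2/(5cos²θ)) cos³(2θ) cos⁴θ sin⁴θ dθ
    = 17/2400 - π/1280`. -/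
theorem stmt19 :
    (∫ θ in (0:ℝ)..(π/4),
      ((3/10) * (1 / (cos θ + sin θ)^2 + 1 / (cos θ - sin θ)^2) + 2 / (5 * (cos θ)^2))
        * (cos (2*θ))^3 * (cos θ)^4 * (sin θ)^4)
    = 17/2400 - π/1280 := by
  have hpi := pi_pos
  have hcos : ∀ θ ∈ Set.uIcc 0 (π/4), cos θ ≠ 0 := by
    intro θ hθ
    rw [Set.uIcc_of_le (by positivity)] at hθ
    exact (cos_pos_of_mem_Ioo ⟨by linarith [hθ.1], by linarith [hθ.2]⟩).ne'
  rw [intervalIntegral.integral_congr fun θ hθ => integrand_eq θ (hcos θ hθ),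
    intervalIntegral.integral_eq_sub_of_hasDerivAt
    (fun θ _ => hasDerivAt_antideriv θ)
    (Continuous.intervalIntegrable (by fun_prop) _ _)]
  have h2 : 2 * (π/4) = π/2 := by ring
  simp only [h2, sin_pi_div_two, cos_pi_div_two, mul_zero, sin_zero, cos_zero]
  ring
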